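/- Let n ≥ 4 be an integer and let Λ ⊂ ℝ² be a closed set that is 2-periodic with respect to the second variable. For 2 ≤ k ≤ n−2 define Π̃^{k*}_{ne}(Λ) = Π^{k*}_{su}(Λ) ∩ {ξ ∈ Π^k(Λ) : τ ∈ P^{Π^k(Λ),ξ}_2}, where τ(ξ) = ∏_{p=2}^{k} ∏_{q=1}^{p−1} (e^{πiη_p} − e^{πiη_q})² with η_1 < ⋯ < η_k the elements of Img(ξ). Then for every k with 2 ≤ k ≤ n−2, Π^{k*}_{ne}(Λ) ⊂ Π̃^{k*}_{ne}(Λ). -/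

import Mathlib

open MeasureTheory Complex

/-- Fourier transform with the convention `f̂(ξ) = ∫ e^{πixξ} f(x) dx`. -/
noncomputable def FT (f : ℝ → ℂ) (ξ : ℝ) : ℂ :=
  ∫ x : ℝ, Complex.exp (Real.pi * Complex.I * x * ξ) * f x

/-- `e^{πiη}`. -/
noncomputable def cexpEta (η : ℝ) : ℂ := Complex.exp (Real.pi * Complex.I * η)

/-- `Λ` is 2-periodic with respect to the second variable. -/
def Periodic2 (Λ : Set (ℝ × ℝ)) : Prop :=
  ∀ ξ η : ℝ, (ξ, η) ∈ Λ ↔ (ξ, η + 2) ∈ Λ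

/-- The projection `Π(Λ)` of `Λ` on the x-axis. -/
def proj (Λ : Set (ℝ × ℝ)) : Set ℝ := {ξ | ∃ η : ℝ, (ξ, η) ∈ Λ}

/-- `Img(ξ) = {η ∈ [0,2) : (ξ,η) ∈ Λ}`. -/
def Img (Λ : Set (ℝ × ℝ)) (ξ : ℝ) : Set ℝ := {η | η ∈ Set.Ico (0 : ℝ) 2 ∧ (ξ, η) ∈ Λ}

/-- `Π^k(Λ)` for `k < n`: points of `Π(Λ)` whose `Img` has exactly `k` elements. -/
def projExact (Λ : Set (ℝ × ℝ)) (k : ℕ) : Set ℝ :=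
  {ξ | ξ ∈ proj Λ ∧ (Img Λ ξ).encard = k}

/-- `Π^n(Λ)`: points of `Π(Λ)` whose `Img` has at least `n` elements. -/
def projAtLeast (Λ : Set (ℝ × ℝ)) (n : ℕ) : Set ℝ :=
  {ξ | ξ ∈ proj Λ ∧ (n : ℕ∞) ≤ (Img Λ ξ).encard}

/-- `ψ ∈ P^{E,ξ}_l` : there are an open interval `I ∋ ξ` and `φ_1,…,φ_{l-1} ∈ L¹(ℝ)` with
`φ̂_1 + φ̂_2 ψ + ⋯ + φ̂_{l-1} ψ^{l-2} + ψ^{l-1} = 0` on `I ∩ E`. -/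
def Pmem (E : Set ℝ) (ξ : ℝ) (l : ℕ) (ψ : ℝ → ℂ) : Prop :=
  ∃ a b : ℝ, ξ ∈ Set.Ioo a b ∧
    ∃ φ : Fin (l - 1) → ℝ → ℂ, (∀ i, Integrable (φ i)) ∧
      ∀ x ∈ Set.Ioo a b ∩ E,
        (∑ i : Fin (l - 1), FT (φ i) x * ψ x ^ (i : ℕ)) + ψ x ^ (l - 1) = 0

/-- `Π^{1*}(Λ)`: those `ξ ∈ Π^1(Λ)` such that `χ ∈ P^{Π^1(Λ),ξ}_n`, where
`χ(ξ') = e^{πiη}` with `η` the unique element of `Img(ξ')`. -/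
def projOneStar (Λ : Set (ℝ × ℝ)) (n : ℕ) : Set ℝ :=
  {ξ | ξ ∈ projExact Λ 1 ∧ ∃ χ : ℝ → ℂ,
    (∀ ξ' ∈ projExact Λ 1, ∀ η ∈ Img Λ ξ', χ ξ' = cexpEta η) ∧
    Pmem (projExact Λ 1) ξ n χ}

/-- `Π^{k*}_{su}(Λ)`. -/
def projStarSu (Λ : Set (ℝ × ℝ)) (n k : ℕ) : Set ℝ :=
  {ξ | ξ ∈ projExact Λ k ∧ ∃ a b : ℝ, ξ ∈ Set.Ioo a b ∧
    ∃ φ : Fin (n - 1) → ℝ → ℂ, (∀ i, Integrable (φ i)) ∧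
      ∀ ξ' ∈ Set.Ioo a b ∩ projExact Λ k, ∀ η ∈ Img Λ ξ',
        (∑ i : Fin (n - 1), FT (φ i) ξ' * cexpEta η ^ (i : ℕ)) = -(cexpEta η ^ (n - 1))}

/-- `Π^{k*}_{ne}(Λ)` for `k ≥ 2`. -/
def projStarNe (Λ : Set (ℝ × ℝ)) (k : ℕ) : Set ℝ :=
  {ξ | ξ ∈ projExact Λ k ∧ ∃ a b : ℝ, ξ ∈ Set.Ioo a b ∧
    ∃ φ : Fin k → ℝ → ℂ, (∀ i, Integrable (φ i)) ∧
      ∀ ξ' ∈ Set.Ioo a b ∩ projExact Λ k, ∀ η ∈ Img Λ ξ',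
        (∑ i : Fin k, FT (φ i) ξ' * cexpEta η ^ (i : ℕ)) = -(cexpEta η ^ k)}

/-- `(Γ, Λ)` with `Γ = ℝ × {0,…,n-1}` is a Heisenberg uniqueness pair: every admissible
measure `μ = Σ_m (x ↦ (x,m))_*(f_m dx)` (with each `f_m ∈ L¹(ℝ)`) whose Fourier transform
`μ̂(ξ,η) = Σ_m e^{mπiη} f̂_m(ξ)` vanishes on `Λ` must be zero, i.e. each `f_m = 0` a.e. -/
def IsHUP (n : ℕ) (Λ : Set (ℝ × ℝ)) : Prop :=
  ∀ f : Fin n → ℝ → ℂ, (∀ m, Integrable (f m)) →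
    (∀ ξ η : ℝ, (ξ, η) ∈ Λ → ∑ m : Fin n, cexpEta η ^ (m : ℕ) * FT (f m) ξ = 0) →
    ∀ m, f m =ᵐ[volume] (0 : ℝ → ℂ)

/-- `τ` agrees on `Π^k(Λ)` with `ξ ↦ ∏_{q<p} (e^{πiη_p} - e^{πiη_q})²`, where
`η_1 < ⋯ < η_k` enumerate `Img(ξ)`. -/
def tauSpec (Λ : Set (ℝ × ℝ)) (k : ℕ) (τ : ℝ → ℂ) : Prop :=
  ∀ ξ' ∈ projExact Λ k, ∀ η : Fin k → ℝ, StrictMono η → Set.range η = Img Λ ξ' →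
    τ ξ' = ∏ p : Fin k, ∏ q : Fin k,
      if (q : ℕ) < (p : ℕ) then (cexpEta (η p) - cexpEta (η q)) ^ 2 else 1

/-- `Π̃^{k*}_{ne}(Λ) = Π^{k*}_{su}(Λ) ∩ {ξ ∈ Π^k(Λ) : τ ∈ P^{Π^k(Λ),ξ}_2}`. -/
def projStarNeTilde (Λ : Set (ℝ × ℝ)) (n k : ℕ) : Set ℝ :=
  projStarSu Λ n k ∩
    {ξ | ξ ∈ projExact Λ k ∧ ∃ τ : ℝ → ℂ, tauSpec Λ k τ ∧ Pmem (projExact Λ k) ξ 2 τ}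

/-!
On `Π^k(Λ)`, the value `τ(ξ)` is the discriminant of the monic polynomial whose simple roots are
the `k` numbers `e^{πiη}`, `η ∈ Img(ξ)`. Near a point of `Π^{k*}_{ne}(Λ)` all these numbers are
roots of the monic polynomial of degree `k` with coefficients `φ̂_1(ξ), …, φ̂_k(ξ)`, so the two
polynomials coincide. Hence `τ` is a fixed integer polynomial in `φ̂_1, …, φ̂_k`, and it is itself
the Fourier transform of an `L¹` function on a bounded interval: by convolution the restrictions of
such transforms to a bounded set form a ring, which contains the constants because some `L¹`
function has transform `1` there. Membership in `Π^{k*}_{su}(Λ)` follows by multiplying the relation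
of degree `k` by `e^{(n-1-k)πiη}`.
-/

section Discriminant

open Polynomial Lagrange Finset

variable {R S : Type*} [CommRing R] [CommRing S]

theorem sum_card_Ioi_fin (k : ℕ) : ∑ i : Fin k, #(Ioi i) = k * (k - 1) / 2 := by
  simp only [Fin.card_Ioi]
  rw [Fin.sum_univ_eq_sum_range (fun i ↦ k - 1 - i), sum_range_reflect (fun i ↦ i), sum_range_id]

theorem prod_sub_off_diag {k : ℕ} (z : Fin k → R) :
    ∏ i, ∏ j ∈ {i}ᶜ, (z i - z j) =
      (-1) ^ (k * (k - 1) / 2) * ∏ i, ∏ j ∈ Ioi i, (z j - z i) ^ 2 := by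
  calc ∏ i, ∏ j ∈ {i}ᶜ, (z i - z j)
      = ∏ i, ∏ j ∈ Ioi i, (z i - z j) * (z j - z i) :=
        (prod_prod_Ioi_mul_eq_prod_prod_off_diag fun j i ↦ z i - z j).symm
    _ = ∏ i, ∏ j ∈ Ioi i, -1 * (z j - z i) ^ 2 := by congr! 2; ring
    _ = (-1) ^ (k * (k - 1) / 2) * ∏ i, ∏ j ∈ Ioi i, (z j - z i) ^ 2 := by
        simp only [prod_mul_distrib, prod_const, prod_pow_eq_pow_sum, sum_card_Ioi_fin]

theorem resultant_derivative_of_monic {p : R[X]} (hp : p.Monic) :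
    p.resultant (derivative p) p.natDegree (p.natDegree - 1) =
      (-1) ^ (p.natDegree * (p.natDegree - 1) / 2) * p.discr := by
  obtain hdeg | hdeg := p.natDegree.eq_zero_or_pos
  · simp [hp.natDegree_eq_zero.mp hdeg, ← C_1, -map_one]
  · rw [resultant_deriv (natDegree_pos_iff_degree_pos.mp hdeg), hp.leadingCoeff, mul_one]

theorem discr_map_of_monic (φ : R →+* S) {p : R[X]} (hp : p.Monic) :
    (p.map φ).discr = φ p.discr := by
  nontriviality S
  have hres := resultant_derivative_of_monic (hp.map φ)
  rw [hp.natDegree_map, derivative_map, resultant_map_map, resultant_derivative_of_monic hp,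
    map_mul, map_pow, map_neg, map_one] at hres
  exact ((isUnit_neg_one.pow _).mul_left_cancel hres).symm

theorem resultant_nodal_left [Nontrivial R] {ι : Type*} (s : Finset ι) (v : ι → R) {q : R[X]}
    {n : ℕ} (hq : q.natDegree ≤ n) :
    (nodal s v).resultant q (nodal s v).natDegree n = ∏ i ∈ s, q.eval (v i) := by
  rw [nodal, resultant_prod_left s _ q n (by simp) hq]
  simp [hq]

theorem discr_nodal {k : ℕ} (z : Fin k → R) :
    (nodal univ z).discr = ∏ i, ∏ j ∈ Ioi i, (z j - z i) ^ 2 := by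
  nontriviality R
  refine (isUnit_neg_one.pow (k * (k - 1) / 2)).mul_left_cancel ?_
  have hdeg : (nodal univ z).natDegree = k := by simp
  calc (-1) ^ (k * (k - 1) / 2) * (nodal univ z).discr
      = (nodal univ z).resultant (derivative (nodal univ z)) (nodal univ z).natDegree
          ((nodal univ z).natDegree - 1) := by
        rw [resultant_derivative_of_monic nodal_monic, hdeg]
    _ = ∏ i, (derivative (nodal univ z)).eval (z i) :=
        resultant_nodal_left _ _ (natDegree_derivative_le _)
    _ = ∏ i, ∏ j ∈ {i}ᶜ, (z i - z j) := by
        simp only [eval_nodal_derivative_eval_node_eq (mem_univ _), eval_nodal, compl_singleton]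
    _ = _ := prod_sub_off_diag z

theorem eq_nodal_of_monic [IsDomain R] {ι : Type*} {s : Finset ι} {v : ι → R}
    (hv : Set.InjOn v s) {p : R[X]} (hp : p.Monic) (hdeg : p.natDegree = #s)
    (hroot : ∀ i ∈ s, p.eval (v i) = 0) : p = nodal s v := by
  refine eq_of_degree_sub_lt_of_eval_index_eq s hv ?_ fun i hi ↦ by
    rw [hroot i hi, eval_nodal_at_node hi]
  have hdeg' : p.degree = (nodal s v).degree := by
    rw [degree_nodal, degree_eq_natDegree hp.ne_zero, hdeg]
  have hlt := degree_sub_lt_left hdeg' hp.ne_zero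
    (by rw [hp.leadingCoeff, nodal_monic.leadingCoeff])
  rwa [hdeg', degree_nodal] at hlt

/-- The monic polynomial of degree `k` whose coefficient of `X ^ i` is `c i` for `i < k`. -/
noncomputable def monicOfFn {k : ℕ} (c : Fin k → R) : R[X] := X ^ k + ∑ i, C (c i) * X ^ (i : ℕ)

variable {k : ℕ} (c : Fin k → R)

theorem monic_monicOfFn : (monicOfFn c).Monic :=
  monic_X_pow_add (degree_sum_fin_lt c)

theorem natDegree_monicOfFn [Nontrivial R] : (monicOfFn c).natDegree = k := by
  apply natDegree_eq_of_degree_eq_some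
  rw [monicOfFn, degree_add_eq_left_of_degree_lt] <;> simp [degree_sum_fin_lt]

theorem map_monicOfFn (φ : R →+* S) : (monicOfFn c).map φ = monicOfFn fun i ↦ φ (c i) := by
  simp [monicOfFn, Polynomial.map_sum]

theorem eval_monicOfFn (z : R) : (monicOfFn c).eval z = z ^ k + ∑ i, c i * z ^ (i : ℕ) := by
  simp [monicOfFn, eval_finsetSum]

theorem discr_monicOfFn_mem {α : Type*} {A : Subring (α → R)} {c : Fin k → α → R}
    (hc : ∀ i, c i ∈ A) : (fun y ↦ (monicOfFn fun i ↦ c i y).discr) ∈ A := by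
  let coeff (i : Fin k) : A := ⟨c i, hc i⟩
  convert (monicOfFn coeff).discr.2 with y
  let evalAt : A →+* R := (Pi.evalRingHom (fun _ : α ↦ R) y).comp A.subtype
  calc (monicOfFn fun i ↦ c i y).discr
      = ((monicOfFn coeff).map evalAt).discr := by rw [map_monicOfFn]; rfl
    _ = evalAt (monicOfFn coeff).discr := discr_map_of_monic evalAt (monic_monicOfFn coeff)

end Discriminant

section Fourier

open Bornology FourierTransform SchwartzMap

variable {V : Type*} [NormedAddCommGroup V] [InnerProductSpace ℝ V] [FiniteDimensional ℝ V]

theorem exists_schwartzMap_eqOn_one {s : Set V} (hs : IsBounded s) :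
    ∃ f : 𝓢(V, ℂ), Set.EqOn f 1 s := by
  obtain ⟨r, hr, hsr⟩ := hs.subset_closedBall_lt 0 0
  let bump : ContDiffBump (0 : V) := ⟨r, r + 1, hr, lt_add_one r⟩
  have hsupp : HasCompactSupport fun x ↦ (bump x : ℂ) :=
    bump.hasCompactSupport.comp_left Complex.ofReal_zero
  refine ⟨hsupp.toSchwartzMap (Complex.ofRealCLM.contDiff.comp bump.contDiff), fun x hx ↦ ?_⟩
  have hx' : bump x = 1 := bump.one_of_mem_closedBall (hsr hx)
  exact congrArg Complex.ofReal hx'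

variable [MeasurableSpace V] [BorelSpace V]

theorem exists_integrable_fourier_eqOn_one {s : Set V} (hs : IsBounded s) :
    ∃ f : V → ℂ, Integrable f ∧ Set.EqOn (𝓕 f) 1 s := by
  obtain ⟨g, hg⟩ := exists_schwartzMap_eqOn_one hs
  refine ⟨(𝓕⁻ g : 𝓢(V, ℂ)), SchwartzMap.integrable _, ?_⟩
  rwa [← SchwartzMap.fourier_coe, fourier_fourierInv_eq]

/-- The algebra of functions that agree on the bounded set `s` with the Fourier transform of an
integrable function; boundedness is what makes it contain the constants. -/
noncomputable def fourierAlgebraOn (s : Set V) (hs : IsBounded s) : Subalgebra ℂ (V → ℂ) where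
  carrier := {g | ∃ f : V → ℂ, Integrable f ∧ Set.EqOn (𝓕 f) g s}
  mul_mem' := by
    rintro _ _ ⟨f₁, hf₁, h₁⟩ ⟨f₂, hf₂, h₂⟩
    refine ⟨_, hf₁.integrable_convolution (ContinuousLinearMap.mul ℂ ℂ) hf₂, fun y hy ↦ ?_⟩
    rw [Real.fourier_mul_convolution_eq hf₁ hf₂, h₁ hy, h₂ hy, Pi.mul_apply]
  add_mem' := by
    rintro _ _ ⟨f₁, hf₁, h₁⟩ ⟨f₂, hf₂, h₂⟩
    refine ⟨f₁ + f₂, hf₁.add hf₂, fun y hy ↦ ?_⟩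
    have hadd : 𝓕 (f₁ + f₂) = 𝓕 f₁ + 𝓕 f₂ :=
      VectorFourier.fourierIntegral_add Real.continuous_fourierChar continuous_inner hf₁ hf₂
    rw [hadd, Pi.add_apply, h₁ hy, h₂ hy, Pi.add_apply]
  algebraMap_mem' c := by
    obtain ⟨f, hf, h⟩ := exists_integrable_fourier_eqOn_one hs
    refine ⟨c • f, hf.smul c, fun y hy ↦ ?_⟩
    have hsmul : 𝓕 (c • f) = c • 𝓕 f := VectorFourier.fourierIntegral_const_smul _ _ _ _ _
    simp [hsmul, h hy]

theorem fourier_mem_fourierAlgebraOn {s : Set V} (hs : IsBounded s) {f : V → ℂ}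
    (hf : Integrable f) : 𝓕 f ∈ fourierAlgebraOn s hs :=
  ⟨f, hf, Set.eqOn_refl _ _⟩

theorem FT_eq_fourier (f : ℝ → ℂ) (ξ : ℝ) : FT f ξ = 𝓕 f (-ξ / 2) := by
  rw [Real.fourier_eq', FT]
  congr 1 with x
  rw [smul_eq_mul]
  congr 2
  simp
  ring

theorem exists_integrable_FT_eqOn_neg_discr (a b : ℝ) {k : ℕ} {φ : Fin k → ℝ → ℂ}
    (hφ : ∀ i, Integrable (φ i)) :
    ∃ ψ : ℝ → ℂ, Integrable ψ ∧
      ∀ x ∈ Set.Ioo a b, FT ψ x = -(monicOfFn fun i ↦ FT (φ i) x).discr := by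
  have hs : IsBounded ((fun x : ℝ ↦ -x / 2) '' Set.Ioo a b) :=
    (isCompact_Icc.image (by fun_prop)).isBounded.subset (Set.image_mono Set.Ioo_subset_Icc_self)
  obtain ⟨ψ, hψ, hψs⟩ := neg_mem <| discr_monicOfFn_mem
    (A := (fourierAlgebraOn _ hs).toSubring) fun i ↦ fourier_mem_fourierAlgebraOn hs (hφ i)
  refine ⟨ψ, hψ, fun x hx ↦ ?_⟩
  simpa only [FT_eq_fourier, Pi.neg_apply] using hψs (Set.mem_image_of_mem _ hx)

end Fourier

section Fibre

open Polynomial Lagrange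

variable {Λ : Set (ℝ × ℝ)} {ξ : ℝ}

theorem cexpEta_injOn : Set.InjOn cexpEta (Set.Ico 0 2) := by
  intro x hx y hy h
  obtain ⟨m, hm⟩ := Complex.exp_eq_exp_iff_exists_int.mp h
  have hxy : x = y + 2 * m := by
    have hpi : (Real.pi * Complex.I : ℂ) ≠ 0 := by simp [Real.pi_ne_zero]
    exact_mod_cast mul_left_cancel₀ hpi (hm.trans (by ring) : _ = Real.pi * Complex.I * (y + 2 * m))
  have hm0 : m = 0 := by
    have hlt : |(m : ℝ)| < 1 := abs_lt.mpr ⟨by linarith [hx.1, hy.2], by linarith [hx.2, hy.1]⟩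
    exact Int.abs_lt_one_iff.mp (mod_cast hlt)
  simpa [hm0] using hxy

/-- The monic polynomial whose roots are the `e^{πiη}` with `η ∈ Img(ξ)`, each simple. Its
discriminant is `τ(ξ)`. It is `1` when `Img(ξ)` is infinite. -/
noncomputable def imgPoly (Λ : Set (ℝ × ℝ)) (ξ : ℝ) : ℂ[X] :=
  ∏ᶠ η ∈ Img Λ ξ, (X - C (cexpEta η))

theorem imgPoly_eq_nodal {ι : Type*} [Fintype ι] {η : ι → ℝ} (hη : Function.Injective η)
    (hrange : Set.range η = Img Λ ξ) :
    imgPoly Λ ξ = nodal Finset.univ fun i ↦ cexpEta (η i) := by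
  rw [imgPoly, ← hrange, finprod_mem_range hη, finprod_eq_prod_of_fintype, nodal]

theorem tauSpec_discr_imgPoly (Λ : Set (ℝ × ℝ)) (k : ℕ) :
    tauSpec Λ k fun ξ ↦ (imgPoly Λ ξ).discr := by
  intro ξ _ η hη hrange
  calc (imgPoly Λ ξ).discr
      = ∏ q, ∏ p ∈ Finset.Ioi q, (cexpEta (η p) - cexpEta (η q)) ^ 2 := by
        rw [imgPoly_eq_nodal hη.injective hrange, discr_nodal]
    _ = ∏ q : Fin k, ∏ p : Fin k,
          if (q : ℕ) < (p : ℕ) then (cexpEta (η p) - cexpEta (η q)) ^ 2 else 1 := by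
        simp only [← Finset.prod_filter, Fin.val_fin_lt, Finset.filter_lt_eq_Ioi]
    _ = _ := Finset.prod_comm

theorem eq_imgPoly_of_monic {p : ℂ[X]} (hp : p.Monic) (hcard : (Img Λ ξ).encard = p.natDegree)
    (hroot : ∀ η ∈ Img Λ ξ, p.eval (cexpEta η) = 0) : p = imgPoly Λ ξ := by
  have hfin : (Img Λ ξ).Finite := Set.finite_of_encard_eq_coe hcard
  have hinj : Set.InjOn cexpEta hfin.toFinset := by
    rw [hfin.coe_toFinset]
    exact cexpEta_injOn.mono fun η hη ↦ hη.1
  have hdeg : p.natDegree = hfin.toFinset.card := by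
    exact_mod_cast hcard.symm.trans hfin.encard_eq_coe_toFinset_card
  rw [imgPoly, finprod_mem_eq_finite_toFinset_prod _ hfin]
  exact eq_nodal_of_monic hinj hp hdeg (by simpa using hroot)

end Fibre

section Inclusion

variable {Λ : Set (ℝ × ℝ)} {ξ : ℝ} {k : ℕ}

theorem sum_append_zero_mul_pow {R : Type*} [CommSemiring R] (j : ℕ) (c : Fin k → R) (z : R) :
    ∑ i, Fin.append (0 : Fin j → R) c i * z ^ (i : ℕ) = z ^ j * ∑ i, c i * z ^ (i : ℕ) := by
  simp [Fin.sum_univ_add, Finset.mul_sum, pow_add, mul_left_comm]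

theorem projStarSu_mono (Λ : Set (ℝ × ℝ)) (k : ℕ) : Monotone fun n ↦ projStarSu Λ n k := by
  rintro m n hmn ξ ⟨hξ, a, b, hab, φ, hφ, hrel⟩
  obtain ⟨j, hj⟩ : ∃ j, n - 1 = j + (m - 1) := ⟨n - 1 - (m - 1), by omega⟩
  refine ⟨hξ, a, b, hab, ?_⟩
  rw [hj]
  refine ⟨Fin.append 0 φ, fun i ↦ ?_, fun x hx η hη ↦ ?_⟩
  · cases i using Fin.addCases <;> simp [hφ, integrable_zero]
  · have happ (i : Fin (j + (m - 1))) :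
        FT (Fin.append 0 φ i) x = Fin.append (0 : Fin j → ℂ) (fun i ↦ FT (φ i) x) i := by
      cases i using Fin.addCases <;> simp [FT]
    simp only [happ, sum_append_zero_mul_pow, hrel x hx η hη, mul_neg, pow_add]

theorem projStarNe_eq_projStarSu_succ (Λ : Set (ℝ × ℝ)) (k : ℕ) :
    projStarNe Λ k = projStarSu Λ (k + 1) k :=
  rfl

theorem projStarNe_subset_projStarSu {n : ℕ} (Λ : Set (ℝ × ℝ)) (hk : k < n) :
    projStarNe Λ k ⊆ projStarSu Λ n k := by
  rw [projStarNe_eq_projStarSu_succ]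
  exact projStarSu_mono Λ k (Nat.succ_le_of_lt hk)

theorem Pmem_two_discr_imgPoly (hξ : ξ ∈ projStarNe Λ k) :
    Pmem (projExact Λ k) ξ 2 fun x ↦ (imgPoly Λ x).discr := by
  obtain ⟨-, a, b, hab, φ, hφ, hrel⟩ := hξ
  have himg : ∀ x ∈ Set.Ioo a b ∩ projExact Λ k,
      (monicOfFn fun i ↦ FT (φ i) x) = imgPoly Λ x := fun x hx ↦
    eq_imgPoly_of_monic (monic_monicOfFn _) (by rw [natDegree_monicOfFn, hx.2.2]) fun η hη ↦ by
      rw [eval_monicOfFn, hrel x hx η hη, add_neg_cancel]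
  obtain ⟨ψ, hψ, hψdiscr⟩ := exists_integrable_FT_eqOn_neg_discr a b hφ
  refine ⟨a, b, hab, fun _ ↦ ψ, fun _ ↦ hψ, fun x hx ↦ ?_⟩
  simp [hψdiscr x hx.1, himg x hx]

end Inclusion

theorem ne_subset_tilde_general (Λ : Set (ℝ × ℝ)) {n k : ℕ} (hk : k < n) :
    projStarNe Λ k ⊆ projStarNeTilde Λ n k := fun _ hξ ↦
  ⟨projStarNe_subset_projStarSu Λ hk hξ, hξ.1, _, tauSpec_discr_imgPoly Λ k,
    Pmem_two_discr_imgPoly hξ⟩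

theorem ne_subset_tilde (n : ℕ) (hn : 4 ≤ n) (Λ : Set (ℝ × ℝ))
    (hclosed : IsClosed Λ) (hper : Periodic2 Λ) :
    ∀ k : ℕ, 2 ≤ k → k ≤ n - 2 → projStarNe Λ k ⊆ projStarNeTilde Λ n k :=
  fun _ _ hk ↦ ne_subset_tilde_general Λ (by omega)
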